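/- Let E = {p_1⋯p_{j−1} p̌_j p_{j+1}⋯p_k : k ≥ 2, 1 ≤ j ≤ k} and let Φ*(x) = ∫_0^{|x|} α^{−1}(t) dt. There is an absolute constant C > 0 such that for every l ∈ ℕ, every f ∈ L^{Φ*}(𝕋^∞), and every λ > 0, λ({x ∈ 𝕋^∞ : ℳ_{l/E} f(x) > λ}) ≤ (C/λ)·(1 + ∫_{𝕋^∞} Φ*(|f(t)|) dλ(t)). -/

import Mathlib

open MeasureTheory Set

/-- The circle `𝕋 = ℝ/ℤ` with its Lebesgue (Haar) probability measure. -/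
abbrev Circle1 := AddCircle (1 : ℝ)

/-- The infinite torus `𝕋^∞ = ∏_{k=1}^∞ 𝕋`. -/
abbrev Tinf := ℕ → Circle1

/-- `nthPrime k` is the `(k+1)`-st prime: `nthPrime 0 = 2 = p_1`, … -/
noncomputable def nthPrime (k : ℕ) : ℕ := Nat.nth Nat.Prime k

/-- The arc `[a, b) ⊆ 𝕋`. -/
def circleIco (a b : ℝ) : Set Circle1 := (fun r : ℝ => (r : Circle1)) '' Set.Ico a b

/-- The rectangle `B_m(j_1,…,j_d)` in `𝕋^∞`, where `m = p_1^{L_1} ⋯ p_d^{L_d}`. -/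
def Rect (d : ℕ) (L j : Fin d → ℕ) : Set Tinf :=
  {x | ∀ k : Fin d,
    x k.val ∈ circleIco ((j k : ℝ) / ((nthPrime k.val ^ L k : ℕ) : ℝ))
      (((j k : ℝ) + 1) / ((nthPrime k.val ^ L k : ℕ) : ℝ))}

/-- `μ` is the product Lebesgue probability measure on `𝕋^∞`. -/
def IsProductLebesgue (μ : Measure Tinf) : Prop :=
  IsProbabilityMeasure μ ∧
    ∀ (s : Finset ℕ) (A : ℕ → Set Circle1), (∀ i, MeasurableSet (A i)) →
      μ {x | ∀ i ∈ s, x i ∈ A i} = ∏ i ∈ s, volume (A i)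

/-- The rectangle maximal function `ℳ_D g(x)`. -/
noncomputable def MMax (μ : Measure Tinf) (D : Set ℕ) (g : Tinf → ℝ) (x : Tinf) : ENNReal :=
  ⨆ (d : ℕ) (L : Fin d → ℕ) (j : Fin d → ℕ) (_ : (∏ k, nthPrime k.val ^ L k) ∈ D)
    (_ : ∀ k, j k < nthPrime k.val ^ L k) (_ : x ∈ Rect d L j),
    (μ (Rect d L j))⁻¹ * ∫⁻ y in Rect d L j, ‖g y‖₊ ∂μ

/-- `l/D = {n : n divides l and l/n ∈ D}`. -/
def divSet (l : ℕ) (D : Set ℕ) : Set ℕ := {n | n ∣ l ∧ l / n ∈ D}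

/-- The set `E = {p_1 ⋯ p_{j-1} p̌_j p_{j+1} ⋯ p_k : k ≥ 2, 1 ≤ j ≤ k}`. -/
noncomputable def Eset : Set ℕ :=
  {m | ∃ k : ℕ, 2 ≤ k ∧ ∃ j < k, m = ∏ i ∈ Finset.range k \ {j}, nthPrime i}

/-- `α(x) = x^{x-1}` for `x > 1` and `α(x) = x` for `x ≤ 1`. -/
noncomputable def alphaFn (x : ℝ) : ℝ := if 1 < x then x ^ (x - 1) else x

/-- `α⁻¹`, the inverse function of `α`. -/
noncomputable def alphaInv : ℝ → ℝ := Function.invFun alphaFn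

/-- `Φ*(x) = ∫_0^{|x|} α⁻¹(t) dt`. -/
noncomputable def PhiStar (x : ℝ) : ℝ := ∫ t in (0:ℝ)..|x|, alphaInv t


lemma pow_succ_add_le (x y : ENNReal) (n : ℕ) :
    x ^ (n+1) + (n+1 : ℕ) * (y * x ^ n) ≤ (x + y) ^ (n+1) := by
  induction n with
  | zero => simp
  | succ n ih =>
    calc x ^ (n+1+1) + ((n+1+1 : ℕ) : ENNReal) * (y * x ^ (n+1))
        ≤ (x ^ (n+1) + (n+1 : ℕ) * (y * x ^ n)) * x + x ^ (n+1) * y := by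
          push_cast; apply le_of_eq; ring
      _ ≤ (x+y)^(n+1) * x + (x+y)^(n+1) * y := by
          gcongr
          exact le_self_add
      _ = _ := by ring

lemma esymm_le_pow {ι : Type*} [DecidableEq ι] (S : Finset ι) (q : ι → ENNReal) (n : ℕ) :
    (n.factorial : ENNReal) * ∑ J ∈ S.powersetCard n, ∏ m ∈ J, q m ≤ (∑ m ∈ S, q m) ^ n := by
  induction S using Finset.induction_on generalizing n with
  | empty => 
    cases n with
    | zero => simp
    | succ n => simp
  | insert a S ha ih =>
    cases n with
    | zero => simp
    | succ n =>
      rw [Finset.powersetCard_succ_insert ha, Finset.sum_union, Finset.sum_image, Finset.sum_insert ha]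
      · have : ∀ J ∈ S.powersetCard n, ∏ m ∈ insert a J, q m = q a * ∏ m ∈ J, q m := by
          intro J hJ
          rw [Finset.prod_insert]
          intro h
          exact ha ((Finset.mem_powersetCard.1 hJ).1 h)
        rw [Finset.sum_congr rfl this, ← Finset.mul_sum, mul_add, add_comm (q a)]
        refine le_trans ?_ (pow_succ_add_le _ _ n)
        refine add_le_add ?_ ?_
        · exact ih (n+1)
        · rw [Nat.factorial_succ]
          push_cast
          have := ih n
          calc ((n:ENNReal)+1) * n.factorial * (q a * ∑ J ∈ S.powersetCard n, ∏ m ∈ J, q m)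
            = (n+1) * (q a * (n.factorial * ∑ J ∈ S.powersetCard n, ∏ m ∈ J, q m)) := by ring
            _ ≤ _ := by gcongr
      · intro J hJ J' hJ' h
        have h1 : a ∉ J := fun h => ha ((Finset.mem_powersetCard.1 hJ).1 h)
        have h2 : a ∉ J' := fun h => ha ((Finset.mem_powersetCard.1 hJ').1 h)
        rw [← Finset.erase_insert h1, ← Finset.erase_insert h2, h]
      · rw [Finset.disjoint_left]
        intro J hJ hJ'
        obtain ⟨J', _, rfl⟩ := Finset.mem_image.1 hJ'
        exact ha ((Finset.mem_powersetCard.1 hJ).1 (Finset.mem_insert_self _ _))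

lemma select_family {Ω ι : Type*} [DecidableEq ι] [MeasurableSpace Ω] (μ : Measure Ω)
    [IsFiniteMeasure μ] (R Q : ι → Set Ω) (j k : ι → ℕ) (s : ENNReal) (T : Finset ι)
    (hQ0 : ∀ a ∈ T, μ (Q a) ≠ 0)
    (H1 : ∀ a m, j m = j a → k a ≤ k m → R a ⊆ R m ∨ Disjoint (R a) (R m))
    (H2 : ∀ a (J : Finset ι), (∀ m ∈ J, k a ≤ k m) → (∀ m ∈ J, j m ≠ j a) →
      (∀ m ∈ J, ∀ m' ∈ J, j m = j m' → m = m') →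
      μ (Q a) ^ J.card * μ (R a ∩ ⋂ m ∈ J, R m) ≤ μ (R a) * ∏ m ∈ J, μ (R m ∩ Q a)) :
    ∃ S ⊆ T, (∀ m ∈ S, ∀ m' ∈ S, m ≠ m' → j m = j m' → Disjoint (R m) (R m')) ∧
      (∀ a ∈ T, (∃ m ∈ S, R a ⊆ R m) ∨ s * μ (Q a) ≤ ∑ m ∈ S, μ (R m ∩ Q a)) ∧
      ∀ n : ℕ, (n.factorial : ENNReal) * ∑ J ∈ S.powersetCard (n+1), μ (⋂ m ∈ J, R m) ≤
        s ^ n * ∑ m ∈ S, μ (R m) := by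
  induction T using Finset.induction_on_max_value (fun a => OrderDual.toDual (k a)) with
  | empty => exact ⟨∅, by simp, by simp, by simp, by simp⟩
  | insert a T haT hk ih =>
    obtain ⟨S, hST, hd, hc, hm⟩ := ih (fun b hb => hQ0 b (Finset.mem_insert_of_mem hb))
    have hk' : ∀ m ∈ S, k a ≤ k m := fun m hm => hk m (hST hm)
    have haS : a ∉ S := fun h => haT (hST h)
    by_cases h1 : ∃ m ∈ S, R a ⊆ R m
    · refine ⟨S, hST.trans (Finset.subset_insert _ _), hd, ?_, hm⟩
      intro b hb
      rcases Finset.mem_insert.1 hb with rfl | hb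
      · exact Or.inl h1
      · exact hc b hb
    by_cases h2 : s * μ (Q a) ≤ ∑ m ∈ S, μ (R m ∩ Q a)
    · refine ⟨S, hST.trans (Finset.subset_insert _ _), hd, ?_, hm⟩
      intro b hb
      rcases Finset.mem_insert.1 hb with rfl | hb
      · exact Or.inr h2
      · exact hc b hb
    push Not at h1
    have hda : ∀ m ∈ S, j m = j a → Disjoint (R a) (R m) := fun m hm hj =>
      (H1 a m hj (hk' m hm)).resolve_left (h1 m hm)
    refine ⟨insert a S, Finset.insert_subset_insert _ hST, ?_, ?_, ?_⟩
    · intro m hm m' hm' hne hj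
      rcases Finset.mem_insert.1 hm with rfl | hm
      · rcases Finset.mem_insert.1 hm' with rfl | hm'
        · exact absurd rfl hne
        · exact hda m' hm' hj.symm
      · rcases Finset.mem_insert.1 hm' with rfl | hm'
        · exact (hda m ‹m ∈ S› hj).symm
        · exact hd m hm m' hm' hne hj
    · intro b hb
      rcases Finset.mem_insert.1 hb with rfl | hb
      · exact Or.inl ⟨b, Finset.mem_insert_self _ _, subset_rfl⟩
      · rcases hc b hb with ⟨m, hm, h⟩ | h
        · exact Or.inl ⟨m, Finset.mem_insert_of_mem hm, h⟩
        · exact Or.inr (h.trans (Finset.sum_le_sum_of_subset (Finset.subset_insert _ _)))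
    · intro n
      have hQa : μ (Q a) ≠ 0 := hQ0 a (Finset.mem_insert_self _ _)
      have hQt : μ (Q a) ≠ ⊤ := measure_ne_top _ _
      have key : ∀ J ∈ S.powersetCard n, μ (⋂ m ∈ insert a J, R m) ≤
          μ (R a) * ∏ m ∈ J, (μ (R m ∩ Q a) / μ (Q a)) := by
        intro J hJ
        obtain ⟨hJS, hJn⟩ := Finset.mem_powersetCard.1 hJ
        have e : (⋂ m ∈ insert a J, R m) = R a ∩ ⋂ m ∈ J, R m := by
          simp
        rw [e]
        by_cases c1 : ∀ m ∈ J, j m ≠ j a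
        · by_cases c2 : ∀ m ∈ J, ∀ m' ∈ J, j m = j m' → m = m'
          · have := H2 a J (fun m hm => hk' m (hJS hm)) c1 c2
            have e2 : ∏ m ∈ J, (μ (R m ∩ Q a) / μ (Q a)) =
              (∏ m ∈ J, μ (R m ∩ Q a)) / μ (Q a) ^ J.card := by
              simp only [div_eq_mul_inv, Finset.prod_mul_distrib, Finset.prod_const, ENNReal.inv_pow]
            rw [e2, ← mul_div_assoc, ENNReal.le_div_iff_mul_le (Or.inl (pow_ne_zero _ hQa))
              (Or.inl (ENNReal.pow_ne_top hQt)), mul_comm]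
            exact this
          · push Not at c2
            obtain ⟨m, hm, m', hm', hj, hne⟩ := c2
            have : (R a ∩ ⋂ m ∈ J, R m) = ∅ := by
              rw [Set.eq_empty_iff_forall_notMem]
              rintro x ⟨_, hx⟩
              simp only [Set.mem_iInter] at hx
              exact Set.disjoint_left.1 (hd m (hJS hm) m' (hJS hm') hne hj) (hx m hm) (hx m' hm')
            simp [this]
        · push Not at c1
          obtain ⟨m, hm, hj⟩ := c1
          have : (R a ∩ ⋂ m ∈ J, R m) = ∅ := by
            rw [Set.eq_empty_iff_forall_notMem]
            rintro x ⟨hxa, hx⟩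
            simp only [Set.mem_iInter] at hx
            exact Set.disjoint_left.1 (hda m (hJS hm) hj) hxa (hx m hm)
          simp [this]
      rw [Finset.powersetCard_succ_insert haS, Finset.sum_union, Finset.sum_image,
        Finset.sum_insert haS, mul_add, mul_add, add_comm]
      · refine add_le_add ?_ ?_
        · calc (n.factorial : ENNReal) * ∑ J ∈ S.powersetCard n, μ (⋂ m ∈ insert a J, R m)
              ≤ n.factorial * ∑ J ∈ S.powersetCard n,
                  (μ (R a) * ∏ m ∈ J, (μ (R m ∩ Q a) / μ (Q a))) := by
                gcongr with J hJ
                exact key J hJ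
            _ = (n.factorial * ∑ J ∈ S.powersetCard n,
                  ∏ m ∈ J, (μ (R m ∩ Q a) / μ (Q a))) * μ (R a) := by
                rw [← Finset.mul_sum]; ring
            _ ≤ (∑ m ∈ S, (μ (R m ∩ Q a) / μ (Q a))) ^ n * μ (R a) := by
                gcongr
                exact esymm_le_pow _ _ _
            _ ≤ s ^ n * μ (R a) := by
                gcongr
                simp only [div_eq_mul_inv]
                rw [← Finset.sum_mul, ← div_eq_mul_inv]
                exact ENNReal.div_le_of_le_mul (le_of_not_ge h2)
        · exact hm n
      · intro J hJ J' hJ' h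
        have h1 : a ∉ J := fun h => haS ((Finset.mem_powersetCard.1 hJ).1 h)
        have h2 : a ∉ J' := fun h => haS ((Finset.mem_powersetCard.1 hJ').1 h)
        rw [← Finset.erase_insert h1, ← Finset.erase_insert h2, h]
      · rw [Finset.disjoint_left]
        intro J hJ hJ'
        obtain ⟨J', _, rfl⟩ := Finset.mem_image.1 hJ'
        exact haS ((Finset.mem_powersetCard.1 hJ).1 (Finset.mem_insert_self _ _))

lemma nested_weak {Ω ι : Type*} [DecidableEq ι] [MeasurableSpace Ω] (μ : Measure Ω)
    (Q : ι → Set Ω) (k : ι → ℕ) (hQm : ∀ a, MeasurableSet (Q a))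
    (H4 : ∀ a m, k a ≤ k m → Q a ⊆ Q m ∨ Disjoint (Q a) (Q m)) (B : Finset ι) :
    ∃ B' ⊆ B, (∀ a ∈ B', ∀ b ∈ B', a ≠ b → Disjoint (Q a) (Q b)) ∧
      ∀ a ∈ B, ∃ b ∈ B', Q a ⊆ Q b := by
  induction B using Finset.induction_on_max_value (fun a => OrderDual.toDual (k a)) with
  | empty => exact ⟨∅, by simp, by simp, by simp⟩
  | insert a T haT hk ih =>
    obtain ⟨S, hST, hd, hc⟩ := ih
    have hk' : ∀ m ∈ S, k a ≤ k m := fun m hm => hk m (hST hm)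
    by_cases h1 : ∃ m ∈ S, Q a ⊆ Q m
    · refine ⟨S, hST.trans (Finset.subset_insert _ _), hd, ?_⟩
      intro b hb
      rcases Finset.mem_insert.1 hb with rfl | hb
      · exact h1
      · exact hc b hb
    push Not at h1
    have hda : ∀ m ∈ S, Disjoint (Q a) (Q m) := fun m hm =>
      (H4 a m (hk' m hm)).resolve_left (h1 m hm)
    refine ⟨insert a S, Finset.insert_subset_insert _ hST, ?_, ?_⟩
    · intro m hm m' hm' hne
      rcases Finset.mem_insert.1 hm with rfl | hm
      · rcases Finset.mem_insert.1 hm' with rfl | hm'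
        · exact absurd rfl hne
        · exact hda m' hm'
      · rcases Finset.mem_insert.1 hm' with rfl | hm'
        · exact (hda m ‹m ∈ S›).symm
        · exact hd m hm m' hm' hne
    · intro b hb
      rcases Finset.mem_insert.1 hb with rfl | hb
      · exact ⟨b, Finset.mem_insert_self _ _, subset_rfl⟩
      · obtain ⟨m, hm, h⟩ := hc b hb
        exact ⟨m, Finset.mem_insert_of_mem hm, h⟩

/-- the union of the original family is controlled by the total measure of the selection -/
lemma cover_bound {Ω ι : Type*} [DecidableEq ι] [MeasurableSpace Ω] (μ : Measure Ω)
    (R Q : ι → Set Ω) (k : ι → ℕ) (hRm : ∀ a, MeasurableSet (R a)) (hQm : ∀ a, MeasurableSet (Q a))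
    (hRQ : ∀ a, R a ⊆ Q a)
    (H4 : ∀ a m, k a ≤ k m → Q a ⊆ Q m ∨ Disjoint (Q a) (Q m)) (T S : Finset ι)
    (hc : ∀ a ∈ T, (∃ m ∈ S, R a ⊆ R m) ∨ (1/6 : ENNReal) * μ (Q a) ≤ ∑ m ∈ S, μ (R m ∩ Q a)) :
    μ (⋃ a ∈ T, R a) ≤ 7 * ∑ m ∈ S, μ (R m) := by
  classical
  obtain ⟨B', hB', hd, hcov⟩ := nested_weak μ Q k hQm H4
    (T.filter (fun a => (1/6 : ENNReal) * μ (Q a) ≤ ∑ m ∈ S, μ (R m ∩ Q a)))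
  have hsub : (⋃ a ∈ T, R a) ⊆ (⋃ m ∈ S, R m) ∪ ⋃ b ∈ B', Q b := by
    intro x hx
    simp only [Set.mem_iUnion] at hx
    obtain ⟨a, ha, hx⟩ := hx
    rcases hc a ha with ⟨m, hm, h⟩ | h
    · exact Or.inl (Set.mem_biUnion (x := m) hm (h hx))
    · obtain ⟨b, hb, hab⟩ := hcov a (Finset.mem_filter.2 ⟨ha, h⟩)
      exact Or.inr (Set.mem_biUnion (x := b) hb (hab (hRQ a hx)))
  have h1 : μ (⋃ m ∈ S, R m) ≤ ∑ m ∈ S, μ (R m) := measure_biUnion_finset_le _ _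
  have h2 : μ (⋃ b ∈ B', Q b) ≤ 6 * ∑ m ∈ S, μ (R m) := by
    calc μ (⋃ b ∈ B', Q b) ≤ ∑ b ∈ B', μ (Q b) := measure_biUnion_finset_le _ _
      _ ≤ ∑ b ∈ B', 6 * ∑ m ∈ S, μ (R m ∩ Q b) := by
          apply Finset.sum_le_sum
          intro b hb
          have := (Finset.mem_filter.1 (hB' hb)).2
          calc μ (Q b) = 6 * (1/6 * μ (Q b)) := by
                rw [← mul_assoc, one_div, ENNReal.mul_inv_cancel (by simp) (by simp), one_mul]
            _ ≤ _ := by gcongr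
      _ = 6 * ∑ m ∈ S, ∑ b ∈ B', μ (R m ∩ Q b) := by
          rw [← Finset.mul_sum, Finset.sum_comm]
      _ ≤ _ := by
          gcongr with m hm
          rw [← measure_biUnion_finset]
          · apply measure_mono
            simp
          · intro a ha b hb hab
            exact (hd a ha b hb hab).mono inter_subset_right inter_subset_right
          · intro b hb
            exact (hRm m).inter (hQm b)
  calc _ ≤ _ := measure_mono hsub
    _ ≤ _ := measure_union_le _ _
    _ ≤ _ := add_le_add h1 h2
    _ = _ := by ring

lemma alphaFn_strictMono : StrictMono alphaFn := by
  intro x y hxy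
  unfold alphaFn
  by_cases hx : 1 < x
  · have hy : 1 < y := hx.trans hxy
    rw [if_pos hx, if_pos hy]
    calc x ^ (x-1) ≤ y ^ (x-1) := Real.rpow_le_rpow (by linarith) hxy.le (by linarith)
      _ < y ^ (y-1) := Real.rpow_lt_rpow_of_exponent_lt hy (by linarith)
  · rw [if_neg hx]
    by_cases hy : 1 < y
    · rw [if_pos hy]
      have := Real.one_lt_rpow hy (show 0 < y - 1 by linarith)
      linarith
    · rwa [if_neg hy]

lemma alphaFn_surjective : Function.Surjective alphaFn := by
  intro y
  by_cases hy : y ≤ 1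
  · exact ⟨y, by unfold alphaFn; rw [if_neg (not_lt.2 hy)]⟩
  push Not at hy
  have hc : ContinuousOn (fun x : ℝ => x ^ (x - 1)) (Set.Icc 1 (y+1)) := by
    apply ContinuousOn.rpow continuousOn_id (by fun_prop)
    intro x hx
    left
    have := hx.1
    simp only [id]
    linarith
  have h1 : y ≤ (y+1) ^ (y + 1 - 1) := by
    have := Real.rpow_le_rpow_of_exponent_le (show 1 ≤ y+1 by linarith) (show 1 ≤ y + 1 - 1 by linarith)
    rw [Real.rpow_one] at this
    linarith
  obtain ⟨x, hx, hxy⟩ := intermediate_value_Icc (show (1:ℝ) ≤ y+1 by linarith) hc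
    (show y ∈ Set.Icc _ _ from ⟨by simp; linarith, h1⟩)
  refine ⟨x, ?_⟩
  have : 1 < x := by
    rcases hx.1.eq_or_lt with h | h
    · subst h
      simp at hxy
      linarith
    · exact h
  unfold alphaFn
  rw [if_pos this]
  exact hxy

lemma alphaFn_alphaInv (y : ℝ) : alphaFn (alphaInv y) = y :=
  Function.rightInverse_invFun alphaFn_surjective y

lemma alphaInv_alphaFn (y : ℝ) : alphaInv (alphaFn y) = y :=
  Function.leftInverse_invFun alphaFn_strictMono.injective y

lemma alphaInv_mono : Monotone alphaInv := by
  intro a b hab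
  by_contra h
  push Not at h
  have := alphaFn_strictMono h
  rw [alphaFn_alphaInv, alphaFn_alphaInv] at this
  linarith

lemma young_nat (x : ℝ) (hx : 0 ≤ x) (n : ℕ) (hn : 1 ≤ n) :
    x * n ≤ 2 * PhiStar x + 2 * (n:ℝ) ^ n := by
  have h0 : alphaInv 0 = 0 := by
    have := alphaInv_alphaFn 0
    simpa [alphaFn] using this
  have hii : ∀ a b : ℝ, IntervalIntegrable alphaInv volume a b := fun a b =>
    alphaInv_mono.intervalIntegrable
  have hnn : ∀ t, 0 ≤ t → 0 ≤ alphaInv t := fun t ht => by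
    rw [← h0]; exact alphaInv_mono ht
  have hP : PhiStar x = ∫ t in (0:ℝ)..x, alphaInv t := by
    unfold PhiStar; rw [abs_of_nonneg hx]
  have hP0 : 0 ≤ PhiStar x := by
    rw [hP]
    exact intervalIntegral.integral_nonneg hx (fun t ht => hnn t ht.1)
  have han : (n:ℝ) * alphaFn n = (n:ℝ)^n := by
    unfold alphaFn
    have hn' : (0:ℝ) < n := by exact_mod_cast hn
    split_ifs with h
    · have : (n:ℝ) ^ ((n:ℝ) - 1) = (n:ℝ) ^ (n-1) := by
        rw [← Real.rpow_natCast, Nat.cast_sub hn]; simp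
      rw [this, ← pow_succ', Nat.sub_add_cancel hn]
    · have : n = 1 := by
        have : n ≤ 1 := by
          by_contra h'
          exact h (by exact_mod_cast (not_le.1 h'))
        omega
      subst this; simp
  have hn' : (0:ℝ) ≤ n := by positivity
  by_cases h : x / 2 ≤ alphaFn n
  · have : x * n ≤ 2 * (n * alphaFn n) := by nlinarith
    rw [han] at this
    linarith
  · push Not at h
    have h1 : (n:ℝ) ≤ alphaInv (x/2) := by
      rw [← alphaInv_alphaFn n]
      exact alphaInv_mono h.le
    have h2 : (x - x/2) * n ≤ ∫ t in (x/2)..x, alphaInv t := by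
      have := intervalIntegral.integral_mono_on (show x/2 ≤ x by linarith)
        (intervalIntegrable_const (c := (n:ℝ)) (μ := volume)) (hii _ _)
        (fun t ht => h1.trans (alphaInv_mono ht.1))
      simpa using this
    have h3 : 0 ≤ ∫ t in (0:ℝ)..(x/2), alphaInv t :=
      intervalIntegral.integral_nonneg (by linarith) (fun t ht => hnn t ht.1)
    have h4 := intervalIntegral.integral_add_adjacent_intervals (hii 0 (x/2)) (hii (x/2) x)
    rw [← hP] at h4
    have : (0:ℝ) ≤ (n:ℝ)^n := by positivity
    nlinarith

lemma young_enn (x : ℝ) (n : ℕ) (hn : 1 ≤ n) :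
    (‖x‖₊ : ENNReal) * n ≤ 2 * ENNReal.ofReal (PhiStar |x|) + 2 * (n:ENNReal) ^ n := by
  have h := young_nat |x| (abs_nonneg x) n hn
  have e : (‖x‖₊ : ENNReal) = ENNReal.ofReal |x| := by
    rw [← Real.norm_eq_abs, ofReal_norm]; rfl
  rw [e]
  have h2 := ENNReal.ofReal_le_ofReal h
  rw [ENNReal.ofReal_mul (abs_nonneg x), ENNReal.ofReal_natCast] at h2
  refine h2.trans (ENNReal.ofReal_add_le.trans ?_)
  rw [ENNReal.ofReal_mul (by norm_num), ENNReal.ofReal_mul (by norm_num),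
    ENNReal.ofReal_pow (by positivity)]
  simp

lemma pow_self_le_factorial (n : ℕ) : n ^ n ≤ 3 ^ n * n.factorial := by
  have h := Real.pow_div_factorial_le_exp (n:ℝ) (by positivity) n
  have h2 : Real.exp n ≤ 3 ^ n := by
    rw [← mul_one (n:ℝ), Real.exp_nat_mul]
    gcongr
    exact Real.exp_one_lt_three.le
  have h3 := h.trans h2
  rw [div_le_iff₀ (by positivity)] at h3
  exact_mod_cast h3

lemma geom_bound (M : ℕ) :
    ∑ n ∈ Finset.range M, (3:ENNReal)^(n+1) * (n+1) * (1/6)^n ≤ 12 := by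
  have hr : ∀ M : ℕ, ∑ n ∈ Finset.range M, ((n:ℝ)+1) * (1/2)^n = 4 - 2 * (M+2) * (1/2)^M := by
    intro M
    induction M with
    | zero => simp; norm_num
    | succ M ih => rw [Finset.sum_range_succ, ih]; push_cast; ring
  have : ∀ n : ℕ, (3:ENNReal)^(n+1) * (n+1) * (1/6)^n = ENNReal.ofReal (3 * (((n:ℝ)+1) * (1/2)^n)) := by
    intro n
    have : (3:ℝ) * (((n:ℝ)+1) * (1/2)^n) = 3^(n+1) * (n+1) * (1/6)^n := by
      have : (1/2 : ℝ) = 3 * (1/6) := by norm_num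
      rw [this, mul_pow]; ring
    rw [this, ENNReal.ofReal_mul (by positivity), ENNReal.ofReal_mul (by positivity),
      ENNReal.ofReal_pow (by positivity), ENNReal.ofReal_pow (by positivity),
      ENNReal.ofReal_add (by positivity) (by positivity),
      ENNReal.ofReal_div_of_pos (by positivity)]
    simp
  simp only [this]
  rw [← ENNReal.ofReal_sum_of_nonneg (fun n _ => by positivity), ← Finset.mul_sum, hr]
  rw [show (12:ENNReal) = ENNReal.ofReal 12 by simp]
  apply ENNReal.ofReal_le_ofReal
  have : (0:ℝ) ≤ 2 * (M+2) * (1/2)^M := by positivity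
  linarith

open Classical in
lemma choose_eq_sum {Ω ι : Type*} (R : ι → Set Ω) (S : Finset ι) (n : ℕ) (x : Ω) :
    (((S.filter (fun m => x ∈ R m)).card.choose n : ℕ) : ENNReal) =
      ∑ J ∈ S.powersetCard n, (⋂ m ∈ J, R m).indicator (fun _ => (1:ENNReal)) x := by
  rw [← Finset.card_powersetCard]
  simp only [Set.indicator_apply]
  rw [Finset.sum_boole]
  congr 2
  ext J
  simp only [Finset.mem_powersetCard, Finset.mem_filter, Set.mem_iInter, Finset.subset_iff]
  grind

lemma weak_abstract {Ω ι : Type*} [DecidableEq ι] [MeasurableSpace Ω] (μ : Measure Ω)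
    [IsProbabilityMeasure μ] (R : ι → Set Ω) (hR : ∀ a, MeasurableSet (R a)) (S : Finset ι)
    (f g : Ω → ENNReal) (hf : Measurable f)
    (hfg : ∀ x (n : ℕ), 1 ≤ n → f x * n ≤ 2 * g x + 2 * (n:ENNReal)^n)
    (lam : ENNReal) (hlam : 48 ≤ lam) (hlamt : lam ≠ ⊤)
    (hbad : ∀ m ∈ S, lam * μ (R m) ≤ ∫⁻ y in R m, f y ∂μ)
    (hm : ∀ n : ℕ, (n.factorial : ENNReal) * ∑ J ∈ S.powersetCard (n+1), μ (⋂ m ∈ J, R m) ≤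
        (1/6) ^ n * ∑ m ∈ S, μ (R m)) :
    lam * ∑ m ∈ S, μ (R m) ≤ 4 * ∫⁻ x, g x ∂μ := by
  classical
  set A := ∑ m ∈ S, μ (R m) with hA
  have hAt : A ≠ ⊤ := by
    rw [hA]
    exact ENNReal.sum_ne_top.2 (fun m _ => measure_ne_top _ _)
  let N : Ω → ℕ := fun x => (S.filter (fun m => x ∈ R m)).card
  let ch : ℕ → Ω → ENNReal := fun n x => ((N x).choose n : ℕ)
  have hI : ∀ J : Finset ι, MeasurableSet (⋂ m ∈ J, R m) := fun J =>
    Finset.measurableSet_biInter _ (fun m _ => hR m)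
  have hche : ∀ n, ch n = fun x => ∑ J ∈ S.powersetCard n,
      (⋂ m ∈ J, R m).indicator (fun _ => (1:ENNReal)) x := fun n => by
    funext x; exact choose_eq_sum R S n x
  have hchm : ∀ n, Measurable (ch n) := by
    intro n
    rw [hche n]
    exact Finset.measurable_sum _ (fun J _ => measurable_const.indicator (hI J))
  have hchi : ∀ n, ∫⁻ x, ch n x ∂μ = ∑ J ∈ S.powersetCard n, μ (⋂ m ∈ J, R m) := by
    intro n
    rw [hche n, lintegral_finsetSum _ (fun J _ => measurable_const.indicator (hI J))]
    apply Finset.sum_congr rfl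
    intro J _
    rw [lintegral_indicator (hI J)]
    simp
  have hfN : ∑ m ∈ S, ∫⁻ y in R m, f y ∂μ = ∫⁻ x, f x * (N x : ENNReal) ∂μ := by
    simp_rw [← lintegral_indicator (hR _)]
    rw [← lintegral_finsetSum _ (fun m _ => hf.indicator (hR m))]
    apply lintegral_congr
    intro x
    simp only [Set.indicator_apply]
    rw [← Finset.sum_filter, Finset.sum_const, nsmul_eq_mul, mul_comm]
  have hpt : ∀ x, f x * (N x : ENNReal) ≤ 2 * g x +
      ∑ n ∈ Finset.range S.card, (2 * (3 ^ (n+1) * ((n+1).factorial : ENNReal))) * ch (n+1) x := by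
    intro x
    rcases Nat.eq_zero_or_pos (N x) with h | h
    · simp [h]
    · refine (hfg x (N x) h).trans ?_
      gcongr
      have hle : N x ≤ S.card := Finset.card_filter_le _ _
      refine le_trans ?_ (Finset.single_le_sum (f := fun n =>
        (2 * (3 ^ (n+1) * ((n+1).factorial : ENNReal))) * ch (n+1) x)
        (fun _ _ => zero_le) (Finset.mem_range.2 (show N x - 1 < S.card by omega)))
      have e : N x - 1 + 1 = N x := by omega
      simp only [ch, e, Nat.choose_self]
      rw [Nat.cast_one, mul_one]
      gcongr
      exact_mod_cast pow_self_le_factorial (N x)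
  have hInt : lam * A ≤ 2 * ∫⁻ x, g x ∂μ + 24 * A := by
    calc lam * A ≤ ∑ m ∈ S, ∫⁻ y in R m, f y ∂μ := by
          rw [hA, Finset.mul_sum]
          exact Finset.sum_le_sum hbad
      _ = ∫⁻ x, f x * (N x : ENNReal) ∂μ := hfN
      _ ≤ _ := lintegral_mono hpt
      _ = 2 * ∫⁻ x, g x ∂μ + ∑ n ∈ Finset.range S.card,
            (2 * (3 ^ (n+1) * ((n+1).factorial : ENNReal))) *
              ∑ J ∈ S.powersetCard (n+1), μ (⋂ m ∈ J, R m) := by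
          rw [lintegral_add_right _ (Finset.measurable_sum _ (fun n _ => (hchm _).const_mul _)),
            lintegral_const_mul' _ _ (by simp),
            lintegral_finsetSum _ (fun n _ => (hchm _).const_mul _)]
          congr 1
          apply Finset.sum_congr rfl
          intro n _
          rw [lintegral_const_mul _ (hchm _), hchi]
      _ ≤ 2 * ∫⁻ x, g x ∂μ + ∑ n ∈ Finset.range S.card,
            (2 * A) * ((3:ENNReal)^(n+1) * (n+1) * (1/6)^n) := by
          refine add_le_add le_rfl (Finset.sum_le_sum ?_)
          intro n _
          rw [Nat.factorial_succ]
          push_cast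
          calc _ = 2 * 3 ^ (n+1) * (n+1) * ((n.factorial : ENNReal) * ∑ J ∈ S.powersetCard (n+1), μ (⋂ m ∈ J, R m)) := by ring
            _ ≤ 2 * 3 ^ (n+1) * (n+1) * ((1/6) ^ n * A) := mul_le_mul_right (hm n) _
            _ = _ := by ring
      _ ≤ 2 * ∫⁻ x, g x ∂μ + (2 * A) * 12 := by
          rw [← Finset.mul_sum]
          gcongr
          exact geom_bound _
      _ = _ := by ring
  have hlA : lam * A ≠ ⊤ := ENNReal.mul_ne_top hlamt hAt
  have : lam * A + lam * A ≤ 4 * ∫⁻ x, g x ∂μ + lam * A := by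
    calc lam * A + lam * A ≤ (2 * ∫⁻ x, g x ∂μ + 24 * A) + (2 * ∫⁻ x, g x ∂μ + 24 * A) := by gcongr
      _ = 4 * ∫⁻ x, g x ∂μ + 48 * A := by ring
      _ ≤ _ := by gcongr
  exact (ENNReal.add_le_add_iff_right hlA).1 this

/-- the digit `⌊N x⌋` -/
noncomputable def dig (N : ℕ) (x : Circle1) : ℕ :=
  ⌊(N : ℝ) * (AddCircle.equivIco (1:ℝ) 0 x : ℝ)⌋₊

lemma measurable_dig (N : ℕ) : Measurable (dig N) := by
  unfold dig
  apply Nat.measurable_floor.comp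
  apply Measurable.const_mul
  exact measurable_subtype_coe.comp (AddCircle.measurableEquivIco (1:ℝ) 0).measurable

lemma dig_one (x : Circle1) : dig 1 x = 0 := by
  unfold dig
  have := (AddCircle.equivIco (1:ℝ) 0 x).2
  simp only [zero_add, Set.mem_Ico] at this
  rw [Nat.floor_eq_zero]
  simpa using this.2

lemma dig_coarse {N N' : ℕ} (h : N' ∣ N) (hN : 0 < N) (y z : Circle1) (hyz : dig N y = dig N z) :
    dig N' y = dig N' z := by
  obtain ⟨c, rfl⟩ := h
  have hc : 0 < c := Nat.pos_of_mul_pos_left hN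
  have key : ∀ x, dig N' x = dig (N' * c) x / c := by
    intro x
    unfold dig
    rw [← Nat.floor_div_natCast]
    congr 1
    push_cast
    field_simp
  rw [key, key, hyz]

lemma dig_coarse' {N' c : ℕ} (hc : 0 < c) (x : Circle1) : dig N' x = dig (N' * c) x / c := by
  unfold dig
  rw [← Nat.floor_div_natCast]
  congr 1
  push_cast
  field_simp

lemma mem_circleIco_iff {N v : ℕ} (hv : v < N) (x : Circle1) :
    x ∈ circleIco ((v:ℝ) / (N:ℝ)) (((v:ℝ)+1) / (N:ℝ)) ↔ dig N x = v := by
  have hN : (0:ℝ) < N := by exact_mod_cast (by omega : 0 < N)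
  have hv' : (v:ℝ) + 1 ≤ N := by exact_mod_cast hv
  constructor
  · rintro ⟨r, ⟨h1, h2⟩, rfl⟩
    have hr : r ∈ Set.Ico (0:ℝ) (0+1) := by
      constructor
      · exact le_trans (by positivity) h1
      · rw [zero_add]
        exact h2.trans_le ((div_le_one hN).2 hv')
    unfold dig
    simp only
    rw [AddCircle.equivIco_coe_eq hr]
    rw [Nat.floor_eq_iff (mul_nonneg hN.le hr.1)]
    rw [div_le_iff₀ hN] at h1
    rw [lt_div_iff₀ hN] at h2
    constructor <;> linarith
  · intro h
    have hr := (AddCircle.equivIco (1:ℝ) 0 x).2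
    unfold dig at h
    rw [Nat.floor_eq_iff (mul_nonneg hN.le hr.1)] at h
    refine ⟨(AddCircle.equivIco (1:ℝ) 0 x : ℝ), ⟨?_, ?_⟩, AddCircle.coe_equivIco⟩
    · rw [div_le_iff₀ hN]; linarith [h.1]
    · rw [lt_div_iff₀ hN]; linarith [h.2]

/-- cylinder sets prescribed by digits -/
def Cyl (D : ℕ) (N v : ℕ → ℕ) : Set Tinf := {x | ∀ c ∈ Finset.range D, x c ∈ {y | dig (N c) y = v c}}

lemma digset_meas (N v : ℕ) : MeasurableSet {y | dig N y = v} :=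
  measurable_dig N (measurableSet_singleton v)

lemma box_meas (D : ℕ) (A : ℕ → Set Circle1) (hA : ∀ c, MeasurableSet (A c)) :
    MeasurableSet {x : Tinf | ∀ c ∈ Finset.range D, x c ∈ A c} := by
  have : {x : Tinf | ∀ c ∈ Finset.range D, x c ∈ A c} = ⋂ c ∈ Finset.range D, (fun x : Tinf => x c) ⁻¹' (A c) := by
    ext x; simp
  rw [this]
  exact Finset.measurableSet_biInter _ (fun c _ => measurable_pi_apply c (hA c))

lemma cyl_meas (D : ℕ) (N v : ℕ → ℕ) : MeasurableSet (Cyl D N v) :=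
  box_meas D _ (fun c => digset_meas _ _)

lemma cyl_nested (D : ℕ) (N v N' v' : ℕ → ℕ) (hN : ∀ c, 0 < N c) (h : ∀ c, N' c ∣ N c) :
    Cyl D N v ⊆ Cyl D N' v' ∨ Disjoint (Cyl D N v) (Cyl D N' v') := by
  by_cases hd : Disjoint (Cyl D N v) (Cyl D N' v')
  · exact Or.inr hd
  · left
    rw [Set.not_disjoint_iff] at hd
    obtain ⟨y, hy, hy'⟩ := hd
    intro x hx c hc
    have h1 := hx c hc
    have h2 := hy c hc
    have h3 := hy' c hc
    simp only [Set.mem_ofPred_eq] at *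
    rw [← h3]
    exact dig_coarse (h c) (hN c) _ _ (h1.trans h2.symm)

/-- product inequality -/
lemma prod_ineq {ι : Type*} [DecidableEq ι] (μ : Measure Tinf) (hμ : IsProductLebesgue μ) (D : ℕ)
    (Ra Qa : ℕ → Set Circle1) (R : ι → ℕ → Set Circle1) (J : Finset ι) (ja : ℕ) (j : ι → ℕ)
    (hRam : ∀ c, MeasurableSet (Ra c)) (hQam : ∀ c, MeasurableSet (Qa c))
    (hRm : ∀ m c, MeasurableSet (R m c))
    (hR : ∀ m ∈ J, ∀ c ∈ Finset.range D, c ≠ j m → Qa c ⊆ R m c)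
    (ha : ∀ c ∈ Finset.range D, c ≠ ja → Ra c = Qa c)
    (hja : ∀ m ∈ J, j m ≠ ja) (hinj : ∀ m ∈ J, ∀ m' ∈ J, j m = j m' → m = m') :
    μ {x | ∀ c ∈ Finset.range D, x c ∈ Qa c} ^ J.card *
      μ ({x | ∀ c ∈ Finset.range D, x c ∈ Ra c} ∩ ⋂ m ∈ J, {x | ∀ c ∈ Finset.range D, x c ∈ R m c}) ≤
    μ {x | ∀ c ∈ Finset.range D, x c ∈ Ra c} *
      ∏ m ∈ J, μ ({x | ∀ c ∈ Finset.range D, x c ∈ R m c} ∩ {x | ∀ c ∈ Finset.range D, x c ∈ Qa c}) := by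
  have e1 : ({x | ∀ c ∈ Finset.range D, x c ∈ Ra c} ∩ ⋂ m ∈ J, {x : Tinf | ∀ c ∈ Finset.range D, x c ∈ R m c})
      = {x | ∀ c ∈ Finset.range D, x c ∈ Ra c ∩ ⋂ m ∈ J, R m c} := by
    ext x
    simp only [Set.mem_inter_iff, Set.mem_ofPred_eq, Set.mem_iInter]
    grind
  have e2 : ∀ m, ({x : Tinf | ∀ c ∈ Finset.range D, x c ∈ R m c} ∩ {x | ∀ c ∈ Finset.range D, x c ∈ Qa c})
      = {x | ∀ c ∈ Finset.range D, x c ∈ R m c ∩ Qa c} := by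
    intro m
    ext x
    simp only [Set.mem_inter_iff, Set.mem_ofPred_eq]
    grind
  simp only [e1, e2]
  rw [hμ.2 _ Qa hQam, hμ.2 _ Ra hRam, hμ.2 _ (fun c => Ra c ∩ ⋂ m ∈ J, R m c)
    (fun c => (hRam c).inter (Finset.measurableSet_biInter _ (fun m _ => hRm m c)))]
  have e3 : ∀ m, μ {x | ∀ c ∈ Finset.range D, x c ∈ R m c ∩ Qa c} =
      ∏ c ∈ Finset.range D, volume (R m c ∩ Qa c) := fun m =>
    hμ.2 _ (fun c => R m c ∩ Qa c) (fun c => (hRm m c).inter (hQam c))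
  simp only [e3]
  rw [← Finset.prod_pow, Finset.prod_comm, ← Finset.prod_mul_distrib, ← Finset.prod_mul_distrib]
  apply Finset.prod_le_prod'
  intro c hc
  by_cases h : ∃ m0 ∈ J, j m0 = c
  · obtain ⟨m0, hm0, rfl⟩ := h
    rw [ha _ hc (hja m0 hm0), ← Finset.mul_prod_erase J _ hm0]
    have : ∏ m ∈ J.erase m0, volume (R m (j m0) ∩ Qa (j m0)) = volume (Qa (j m0)) ^ (J.card - 1) := by
      rw [← Finset.card_erase_of_mem hm0, ← Finset.prod_const]
      apply Finset.prod_congr rfl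
      intro m hm
      obtain ⟨hne, hmJ⟩ := Finset.mem_erase.1 hm
      rw [Set.inter_eq_right.2]
      exact hR m hmJ _ hc (fun h => hne (hinj m hmJ m0 hm0 h.symm))
    rw [this]
    have hcard : J.card = J.card - 1 + 1 := by
      have := Finset.card_pos.2 ⟨m0, hm0⟩
      omega
    calc volume (Qa (j m0)) ^ J.card * volume (Qa (j m0) ∩ ⋂ m ∈ J, R m (j m0))
        ≤ volume (Qa (j m0)) ^ J.card * volume (R m0 (j m0) ∩ Qa (j m0)) := by
          refine mul_le_mul_right (measure_mono ?_) _
          intro y hy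
          simp only [Set.mem_inter_iff, Set.mem_iInter] at hy
          exact ⟨hy.2 m0 hm0, hy.1⟩
      _ = volume (Qa (j m0)) ^ (J.card - 1 + 1) * volume (R m0 (j m0) ∩ Qa (j m0)) := by
          rw [← hcard]
      _ = _ := by rw [pow_succ]; ring
  · push Not at h
    have : ∏ m ∈ J, volume (R m c ∩ Qa c) = volume (Qa c) ^ J.card := by
      rw [← Finset.prod_const]
      apply Finset.prod_congr rfl
      intro m hm
      rw [Set.inter_eq_right.2]
      exact hR m hm _ hc (h m hm).symm
    rw [this, mul_comm]
    gcongr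
    exact inter_subset_left

lemma nthPrime_prime (c : ℕ) : (nthPrime c).Prime := Nat.prime_nth_prime c

lemma nthPrime_inj : Function.Injective nthPrime :=
  Nat.nth_injective Nat.infinite_setOfPred_prime

lemma lt_nthPrime (c : ℕ) : c < nthPrime c := by
  have h : StrictMono nthPrime := Nat.nth_strictMono Nat.infinite_setOfPred_prime
  have h0 := h.id_le c
  have h1 : c + 2 ≤ nthPrime c := by
    induction c with
    | zero => exact (nthPrime_prime 0).two_le
    | succ c ih => have := h (Nat.lt_succ_self c); have := ih (h.id_le c); simp at *; omega
  omega

lemma fact_prod (s : Finset ℕ) (e : ℕ → ℕ) (c : ℕ) :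
    (∏ i ∈ s, nthPrime i ^ e i).factorization (nthPrime c) = if c ∈ s then e c else 0 := by
  rw [Nat.factorization_prod (fun i _ => pow_ne_zero _ (nthPrime_prime i).ne_zero)]
  simp only [Finsupp.coe_finsetSum, Finset.sum_apply, Nat.factorization_pow, Finsupp.smul_apply,
    (nthPrime_prime _).factorization, Finsupp.single_apply, nthPrime_inj.eq_iff]
  simp

/-- exponent levels of the rectangles -/
noncomputable def lev (l k j c : ℕ) : ℕ :=
  l.factorization (nthPrime c) - if c < k ∧ c ≠ j then 1 else 0

/-- exponent levels of the parent rectangles -/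
noncomputable def levQ (l k c : ℕ) : ℕ :=
  l.factorization (nthPrime c) - if c < k then 1 else 0

abbrev Idx (l : ℕ) := Fin (l+1+1) × Fin (l+1+1) × (Fin (l+1) → Fin (l+1))

def vv {l : ℕ} (t : Idx l) (c : ℕ) : ℕ := if h : c < l + 1 then (t.2.2 ⟨c, h⟩ : ℕ) else 0

noncomputable def NR {l : ℕ} (t : Idx l) (c : ℕ) : ℕ := nthPrime c ^ lev l t.1 t.2.1 c

noncomputable def NQ {l : ℕ} (t : Idx l) (c : ℕ) : ℕ := nthPrime c ^ levQ l t.1 c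

noncomputable def vQ {l : ℕ} (t : Idx l) (c : ℕ) : ℕ :=
  vv t c / nthPrime c ^ (lev l t.1 t.2.1 c - levQ l t.1 c)

def RR {l : ℕ} (t : Idx l) : Set Tinf := Cyl (l+1) (NR t) (vv t)

def QQ {l : ℕ} (t : Idx l) : Set Tinf := Cyl (l+1) (NQ t) (vQ t)

lemma levQ_le (l k j c : ℕ) : levQ l k c ≤ lev l k j c := by
  unfold lev levQ
  split_ifs <;> first | omega | grind

lemma lev_eq_levQ (l k j c : ℕ) (h : c ≠ j) : lev l k j c = levQ l k c := by
  unfold lev levQ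
  simp [h]

lemma lev_mono (l k k' j c : ℕ) (h : k ≤ k') : lev l k' j c ≤ lev l k j c := by
  unfold lev
  split_ifs <;> first | omega | grind

lemma levQ_mono (l k k' c : ℕ) (h : k ≤ k') : levQ l k' c ≤ levQ l k c := by
  unfold levQ
  split_ifs <;> first | omega | grind

lemma NR_pos {l : ℕ} (t : Idx l) (c : ℕ) : 0 < NR t c := pow_pos (nthPrime_prime c).pos _

lemma NQ_pos {l : ℕ} (t : Idx l) (c : ℕ) : 0 < NQ t c := pow_pos (nthPrime_prime c).pos _

lemma RR_sub_QQ {l : ℕ} (t : Idx l) : RR t ⊆ QQ t := by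
  intro x hx c hc
  have h := hx c hc
  simp only [Set.mem_ofPred_eq] at h ⊢
  unfold vQ
  rw [← h, dig_coarse' (c := nthPrime c ^ (lev l t.1 t.2.1 c - levQ l t.1 c))
    (pow_pos (nthPrime_prime c).pos _)]
  unfold NQ NR
  rw [← pow_add, Nat.add_sub_cancel' (levQ_le _ _ _ _)]

lemma RR_nested {l : ℕ} (a m : Idx l) (hj : (m.2.1 : ℕ) = a.2.1) (hk : (a.1 : ℕ) ≤ m.1) :
    RR a ⊆ RR m ∨ Disjoint (RR a) (RR m) := by
  apply cyl_nested _ _ _ _ _ (NR_pos a)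
  intro c
  unfold NR
  rw [hj]
  exact pow_dvd_pow _ (lev_mono _ _ _ _ _ hk)

lemma QQ_nested {l : ℕ} (a m : Idx l) (hk : (a.1 : ℕ) ≤ m.1) :
    QQ a ⊆ QQ m ∨ Disjoint (QQ a) (QQ m) := by
  apply cyl_nested _ _ _ _ _ (NQ_pos a)
  intro c
  exact pow_dvd_pow _ (levQ_mono _ _ _ _ hk)

lemma RR_indep {l : ℕ} (μ : Measure Tinf) (hμ : IsProductLebesgue μ) (a : Idx l)
    (J : Finset (Idx l)) (hk : ∀ m ∈ J, (a.1 : ℕ) ≤ m.1) (hja : ∀ m ∈ J, (m.2.1 : ℕ) ≠ a.2.1)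
    (hinj : ∀ m ∈ J, ∀ m' ∈ J, (m.2.1 : ℕ) = m'.2.1 → m = m') :
    μ (QQ a) ^ J.card * μ (RR a ∩ ⋂ m ∈ J, RR m) ≤ μ (RR a) * ∏ m ∈ J, μ (RR m ∩ QQ a) := by
  by_cases hd : ∃ m ∈ J, Disjoint (RR m) (QQ a)
  · obtain ⟨m, hm, hd⟩ := hd
    have : (RR a ∩ ⋂ m ∈ J, RR m) = ∅ := by
      rw [Set.eq_empty_iff_forall_notMem]
      rintro x ⟨hxa, hx⟩
      simp only [Set.mem_iInter] at hx
      exact Set.disjoint_left.1 hd (hx m hm) (RR_sub_QQ a hxa)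
    simp [this]
  · push Not at hd
    refine prod_ineq μ hμ (l+1) (fun c => {y | dig (NR a c) y = vv a c})
      (fun c => {y | dig (NQ a c) y = vQ a c}) (fun m c => {y | dig (NR m c) y = vv m c}) J
      (a.2.1 : ℕ) (fun m => (m.2.1 : ℕ)) (fun c => digset_meas _ _) (fun c => digset_meas _ _)
      (fun m c => digset_meas _ _) ?_ ?_ hja hinj
    · intro m hm c hc hcj y hy
      obtain ⟨z, hz1, hz2⟩ := Set.not_disjoint_iff.1 (hd m hm)
      have h1 := hz1 c hc
      have h2 := hz2 c hc
      simp only [Set.mem_ofPred_eq] at h1 h2 hy ⊢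
      rw [← h1]
      refine dig_coarse ?_ (NQ_pos a c) _ _ (hy.trans h2.symm)
      unfold NR NQ
      rw [lev_eq_levQ _ _ _ _ hcj]
      exact pow_dvd_pow _ (levQ_mono _ _ _ _ (hk m hm))
    · intro c hc hcj
      unfold NR NQ vQ
      rw [lev_eq_levQ _ _ _ _ hcj]
      simp

lemma rect_eq (l d : ℕ) (L jj : Fin d → ℕ) (hD : (∏ k, nthPrime k.val ^ L k) ∈ divSet l Eset)
    (hj : ∀ k, jj k < nthPrime k.val ^ L k) : ∃ t : Idx l, Rect d L jj = RR t := by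
  obtain ⟨hdvd, k, hk2, j, hjk, he⟩ := hD
  have hn0 : (∏ k, nthPrime k.val ^ L k) ≠ 0 :=
    Finset.prod_ne_zero_iff.2 (fun i _ => pow_ne_zero _ (nthPrime_prime _).ne_zero)
  have he0 : (∏ i ∈ Finset.range k \ {j}, nthPrime i) ≠ 0 :=
    Finset.prod_ne_zero_iff.2 (fun i _ => (nthPrime_prime _).ne_zero)
  have hl : l = (∏ k, nthPrime k.val ^ L k) * ∏ i ∈ Finset.range k \ {j}, nthPrime i := by
    rw [← he, Nat.mul_div_cancel' hdvd]
  have hl0 : l ≠ 0 := by rw [hl]; exact mul_ne_zero hn0 he0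
  -- extension of `L`
  let L' : ℕ → ℕ := fun c => if h : c < d then L ⟨c, h⟩ else 0
  have hnL : (∏ k, nthPrime k.val ^ L k) = ∏ c ∈ Finset.range d, nthPrime c ^ L' c := by
    rw [← Fin.prod_univ_eq_prod_range (fun c => nthPrime c ^ L' c)]
    apply Finset.prod_congr rfl
    intro c _
    simp [L']
  have hfact : ∀ c, l.factorization (nthPrime c) = L' c + if c < k ∧ c ≠ j then 1 else 0 := by
    intro c
    have h1 := fact_prod (Finset.range d) L' c
    have h2 := fact_prod (Finset.range k \ {j}) (fun _ => 1) c
    simp only [pow_one] at h2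
    rw [hl, Nat.factorization_mul hn0 he0, Finsupp.add_apply, hnL, h1, h2]
    congr 1
    · simp only [Finset.mem_range, L']
      split_ifs <;> rfl
    · simp
  have hlev : ∀ c, lev l k j c = L' c := by
    intro c
    unfold lev
    rw [hfact c]
    omega
  have hple : ∀ c, nthPrime c ^ L' c ≤ l := by
    intro c
    apply Nat.le_of_dvd (Nat.pos_of_ne_zero hl0)
    refine dvd_trans (pow_dvd_pow _ ?_) (Nat.ordProj_dvd l (nthPrime c))
    rw [hfact c]; omega
  have hL0 : ∀ c, l ≤ c → L' c = 0 := by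
    intro c hc
    by_contra h
    have h1 := hple c
    have h2 := lt_nthPrime c
    have h3 : nthPrime c ^ 1 ≤ nthPrime c ^ L' c :=
      Nat.pow_le_pow_right (nthPrime_prime c).pos (by omega)
    rw [pow_one] at h3
    omega
  have hdl : ∀ i, i < k → i ≠ j → i < l := by
    intro i hi hij
    have : nthPrime i ∣ l := by
      rw [hl]
      exact Dvd.dvd.mul_left (Finset.dvd_prod_of_mem _ (by simp [hi, hij])) _
    exact (lt_nthPrime i).trans_le (Nat.le_of_dvd (Nat.pos_of_ne_zero hl0) this)
  have hkl : k ≤ l + 1 := by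
    by_cases h : j = k - 1
    · have := hdl (k-2) (by omega) (by omega)
      omega
    · have := hdl (k-1) (by omega) (by omega)
      omega
  let w : ℕ → ℕ := fun c => if h : c < d then jj ⟨c, h⟩ else 0
  have hw : ∀ c, w c < nthPrime c ^ L' c := by
    intro c
    simp only [w, L']
    split_ifs with h
    · exact hj ⟨c, h⟩
    · simp
  refine ⟨⟨⟨k, by omega⟩, ⟨j, by omega⟩, fun c => ⟨w c, (hw c).trans_le ((hple c).trans (by omega))⟩⟩, ?_⟩
  ext x
  have hL : x ∈ Rect d L jj ↔ ∀ c, c < d → dig (nthPrime c ^ L' c) (x c) = w c := by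
    constructor
    · intro hx c hc
      have h := hx ⟨c, hc⟩
      rw [mem_circleIco_iff (hj ⟨c, hc⟩)] at h
      simpa [L', w, hc] using h
    · intro hx c
      have h := hx c.1 c.2
      rw [mem_circleIco_iff (hj c)]
      simpa [L', w] using h
  rw [hL]
  have hbig : ∀ c, L' c = 0 → dig (nthPrime c ^ L' c) (x c) = w c := by
    intro c h0
    have := hw c
    rw [h0, pow_zero] at this ⊢
    rw [dig_one]; omega
  constructor
  · intro h c hc
    rw [Finset.mem_range] at hc
    simp only [Set.mem_ofPred_eq, NR, vv, hlev, hc, dif_pos]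
    by_cases hcd : c < d
    · exact h c hcd
    · exact hbig c (by simp [L', hcd])
  · intro h c hcd
    by_cases hc : c < l + 1
    · have := h c (Finset.mem_range.2 hc)
      simpa only [Set.mem_ofPred_eq, NR, vv, hlev, hc, dif_pos] using this
    · exact hbig c (hL0 c (by omega))

/-- **Weak type inequality for the rectangle maximal function of `E` (Lemma 6).** There is
an absolute constant `C > 0` such that for every `l`, every `f ∈ L^{Φ*}(𝕋^∞)` and every
`λ > 0`, `λ({ℳ_{l/E} f > λ}) ≤ (C/λ)(1 + ∫ Φ*(|f|) dλ)`. -/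
theorem rect_maximal_weak_type_Eset :
    ∃ C : ℝ, 0 < C ∧
      ∀ (μ : Measure Tinf), IsProductLebesgue μ →
        ∀ l : ℕ, ∀ f : Tinf → ℝ, Measurable f →
          (∫⁻ x, ENNReal.ofReal (PhiStar |f x|) ∂μ) < ⊤ →
          ∀ lam : ℝ, 0 < lam →
            μ {x : Tinf | ENNReal.ofReal lam < MMax μ (divSet l Eset) f x} ≤
              ENNReal.ofReal (C / lam) *
                (1 + ∫⁻ t, ENNReal.ofReal (PhiStar |f t|) ∂μ) := by
  refine ⟨48, by norm_num, ?_⟩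
  intro μ hμ l f hf hfin lam hlam
  haveI : IsProbabilityMeasure μ := hμ.1
  set I := ∫⁻ t, ENNReal.ofReal (PhiStar |f t|) ∂μ with hI
  by_cases hl : lam < 48
  · have h1 : (1 : ENNReal) ≤ ENNReal.ofReal (48 / lam) := by
      rw [← ENNReal.ofReal_one]
      exact ENNReal.ofReal_le_ofReal ((one_le_div hlam).2 hl.le)
    calc _ ≤ (1:ENNReal) := prob_le_one
      _ = 1 * 1 := by simp
      _ ≤ _ := mul_le_mul' h1 le_self_add
  push Not at hl
  classical
  let F : Tinf → ENNReal := fun x => (‖f x‖₊ : ENNReal)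
  have hF : Measurable F := hf.nnnorm.coe_nnreal_ennreal
  set Λ := ENNReal.ofReal lam with hΛ
  let T : Finset (Idx l) := Finset.univ.filter
    (fun t => μ (RR t) ≠ 0 ∧ Λ * μ (RR t) ≤ ∫⁻ y in RR t, F y ∂μ)
  have hcover : {x : Tinf | Λ < MMax μ (divSet l Eset) f x} ⊆ ⋃ t ∈ T, RR t := by
    intro x hx
    simp only [Set.mem_ofPred_eq, MMax, lt_iSup_iff] at hx
    obtain ⟨d, L, jj, hD, hj, hxR, hlt⟩ := hx
    obtain ⟨t, ht⟩ := rect_eq l d L jj hD hj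
    rw [ht] at hxR hlt
    have h0 : μ (RR t) ≠ 0 := by
      intro h0
      rw [setLIntegral_measure_zero _ _ h0, mul_zero] at hlt
      exact absurd hlt (not_lt.2 zero_le)
    refine Set.mem_biUnion (x := t) ?_ hxR
    simp only [T, Finset.coe_filter, Finset.mem_univ, true_and, Set.mem_ofPred_eq]
    refine ⟨h0, ?_⟩
    calc Λ * μ (RR t) ≤ ((μ (RR t))⁻¹ * ∫⁻ y in RR t, F y ∂μ) * μ (RR t) := by
          gcongr
      _ = _ := by
          rw [mul_comm, ← mul_assoc, ENNReal.mul_inv_cancel h0 (measure_ne_top _ _), one_mul]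
  have hRm : ∀ t : Idx l, MeasurableSet (RR t) := fun t => cyl_meas _ _ _
  have hQm : ∀ t : Idx l, MeasurableSet (QQ t) := fun t => cyl_meas _ _ _
  obtain ⟨S, hST, -, hc, hm⟩ := select_family μ (RR (l := l)) QQ (fun t => (t.2.1 : ℕ))
    (fun t => (t.1 : ℕ)) (1/6) T
    (fun a ha h0 => (Finset.mem_filter.1 ha).2.1 (measure_mono_null (RR_sub_QQ a) h0))
    (fun a m hj hk => RR_nested a m hj hk)
    (fun a J hk hja hinj => RR_indep μ hμ a J hk hja hinj)
  have hcov := cover_bound μ (RR (l := l)) QQ (fun t => (t.1 : ℕ)) hRm hQm RR_sub_QQ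
    (fun a m hk => QQ_nested a m hk) T S hc
  have hweak := weak_abstract μ (RR (l := l)) hRm S F (fun x => ENNReal.ofReal (PhiStar |f x|)) hF
    (fun x n hn => young_enn (f x) n hn) Λ
    (by rw [hΛ, show (48:ENNReal) = ENNReal.ofReal 48 by simp]; exact ENNReal.ofReal_le_ofReal hl)
    ENNReal.ofReal_ne_top (fun m hmS => (Finset.mem_filter.1 (hST hmS)).2.2) hm
  rw [← hI] at hweak
  have hΛ0 : Λ ≠ 0 := by
    rw [hΛ]; simpa using hlam
  have hsum : ∑ m ∈ S, μ (RR m) ≤ 4 * I / Λ := by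
    rw [ENNReal.le_div_iff_mul_le (Or.inl hΛ0) (Or.inl ENNReal.ofReal_ne_top), mul_comm]
    exact hweak
  calc _ ≤ _ := measure_mono hcover
    _ ≤ _ := hcov
    _ ≤ 7 * (4 * I / Λ) := by gcongr
    _ = (28 / Λ) * I := by simp only [div_eq_mul_inv]; ring
    _ ≤ ENNReal.ofReal (48 / lam) * (1 + I) := by
        rw [ENNReal.ofReal_div_of_pos hlam]
        refine mul_le_mul' ?_ le_add_self
        gcongr
        rw [show (28:ENNReal) = ENNReal.ofReal 28 by simp]
        exact ENNReal.ofReal_le_ofReal (by norm_num)
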